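/- Set R_n(x) = L(x)^T·P_n(x)·Γ_n^{-1}. Then for all 0 ≤ i,j ≤ 2ℓ: if i > n+j then R_n(x)_{i,j} = 0 for all x, and if i ≤ n+j then R_n(x)_{i,j} = (-1)^i · 2^{-n} · q^{j(2i+1)+2i(2ℓ+n+1)-i²} · [(q²;q²)_n (q^{4ℓ+4};q²)_n / ((q^{2j+2};q²)_n (q^{4ℓ-2j+2};q²)_n)] · [(q^{-4ℓ};q²)_i (q^{-2j-2n};q²)_i / ((q²;q²)_i (q^{4ℓ+4};q²)_i)] · [(q²;q²)_{n+j-i} / (q^{4i+4};q²)_{n+j-i}] · R_i(μ(j);1,1,q^{-2n-2j-2},q^{-4ℓ-2};q²) · C_{n+j-i}(x;q^{2i+2}|q²). In particular every entry of R_n is a scalar multiple of a single continuous q-ultraspherical polynomial. -/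

import Mathlib

open Finset Polynomial MeasureTheory Matrix
open scoped BigOperators ComplexOrder

noncomputable section

/-- q-shifted factorial `(a;p)_n`. -/
def qp (a p : ℂ) (n : ℕ) : ℂ := ∏ j ∈ Finset.range n, (1 - a * p ^ j)

/-- q-Racah polynomial `R_n(μ(x);α,β,γ,δ;p)`. -/
def qRacah (p α β γ δ : ℂ) (n x : ℕ) : ℂ :=
  ∑ k ∈ Finset.range (min n x + 1),
    qp (p ^ (-(n : ℤ))) p k * qp (α * β * p ^ (n + 1)) p k *
        qp (p ^ (-(x : ℤ))) p k * qp (γ * δ * p ^ (x + 1)) p k /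
      (qp (α * p) p k * qp (β * δ * p) p k * qp (γ * p) p k * qp p p k) * p ^ k

/-- `IsUltra C` says that for each base `p`, parameter `β` and degree `n`, `C p β n` is
the continuous q-ultraspherical polynomial: it has degree at most `n` and its values at
`(z+z⁻¹)/2` are given by the symmetric Laurent sum. -/
def IsUltra (C : ℂ → ℂ → ℕ → Polynomial ℂ) : Prop :=
  ∀ (p β : ℂ) (n : ℕ),
    (C p β n).degree ≤ (n : ℕ) ∧
      ∀ z : ℂ, z ≠ 0 →
        (C p β n).eval ((z + z⁻¹) / 2) =
          ∑ r ∈ Finset.range (n + 1),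
            qp β p r * qp β p (n - r) / (qp p p r * qp p p (n - r)) * z ^ ((n : ℤ) - 2 * r)

/-- The matrix-valued polynomial `P_n` (entries in `Polynomial ℂ`); here `L = 2ℓ`. -/
def Pm (q : ℂ) (L : ℕ) (C : ℂ → ℂ → ℕ → Polynomial ℂ) (n : ℕ) :
    Matrix (Fin (L + 1)) (Fin (L + 1)) (Polynomial ℂ) :=
  Matrix.of fun i j =>
    ∑ k ∈ Finset.Icc (i : ℕ) (min L (n + (j : ℕ))),
      Polynomial.C
          ((-1 : ℂ) ^ k *
            q ^ ((n : ℤ) + (2 * (k : ℤ) + 1) * ((k : ℤ) - ((i : ℕ) : ℤ)) +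
                ((j : ℕ) : ℤ) * (2 * (k : ℤ) + 1) + 2 * (k : ℤ) * ((L : ℤ) + (n : ℤ) + 1) -
                (k : ℤ) ^ 2) *
            (qp (q ^ 2) (q ^ 2) k * qp (q ^ 2) (q ^ 2) (k + (i : ℕ)) /
              (qp (q ^ 2) (q ^ 2) (2 * k) * qp (q ^ 2) (q ^ 2) (i : ℕ))) *
            (qp (q ^ (-(2 * (L : ℤ)))) (q ^ 2) k *
                qp (q ^ (-(2 * ((j : ℕ) : ℤ) + 2 * (n : ℤ)))) (q ^ 2) k /
              (qp (q ^ 2) (q ^ 2) k * qp (q ^ (2 * (L : ℤ) + 4)) (q ^ 2) k)) *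
            (qp (q ^ 2) (q ^ 2) (n + (j : ℕ) - k) /
              qp (q ^ (4 * (k : ℤ) + 4)) (q ^ 2) (n + (j : ℕ) - k)) *
            qRacah (q ^ 2) 1 1 (q ^ (-(2 * (n : ℤ) + 2 * ((j : ℕ) : ℤ) + 2)))
              (q ^ (-(2 * (L : ℤ) + 2))) k (j : ℕ)) *
        (C (q ^ 2) (q ^ (-(2 * (k : ℤ)))) (k - (i : ℕ)) *
          C (q ^ 2) (q ^ (2 * (k : ℤ) + 2)) (n + (j : ℕ) - k))

/-- Evaluation of the matrix-valued polynomial `P_n` at a point. -/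
def evP (q : ℂ) (L : ℕ) (C : ℂ → ℂ → ℕ → Polynomial ℂ) (n : ℕ) (x : ℂ) :
    Matrix (Fin (L + 1)) (Fin (L + 1)) ℂ :=
  (Pm q L C n).map (Polynomial.eval x)

/-- The coefficients `α_t(m,n)` of the weight. -/
def alphaC (q : ℂ) (L m n t : ℕ) : ℂ :=
  q ^ (2 * (n : ℤ) * ((L : ℤ) + 1) - (n : ℤ) ^ 2 - (2 * (L : ℤ) + 3) * (t : ℤ) + (t : ℤ) ^ 2 -
      (L : ℤ) + (m : ℤ)) *
    ((1 - q ^ (2 * (L : ℤ) + 2)) / (1 - q ^ (2 * (m : ℤ) + 2))) *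
    (qp (q ^ 2) (q ^ 2) (L - n) * qp (q ^ 2) (q ^ 2) n / qp (q ^ 2) (q ^ 2) L) *
    ((-1 : ℂ) ^ ((m : ℤ) - (t : ℤ)) * qp (q ^ (2 * (m : ℤ) - 2 * (L : ℤ))) (q ^ 2) (n - t) /
      qp (q ^ (2 * (m : ℤ) + 4)) (q ^ 2) (n - t)) *
    (qp (q ^ (2 * (L : ℤ) + 4 - 2 * (t : ℤ))) (q ^ 2) t / qp (q ^ 2) (q ^ 2) t)

/-- The matrix weight `W(x)`. -/
def Wm (q : ℂ) (L : ℕ) (x : ℂ) : Matrix (Fin (L + 1)) (Fin (L + 1)) ℂ :=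
  Matrix.of fun i j =>
    ∑ t ∈ Finset.range (max (i : ℕ) (j : ℕ) + 1),
      alphaC q L (min (i : ℕ) (j : ℕ)) (max (i : ℕ) (j : ℕ)) t *
        (Polynomial.Chebyshev.U ℂ
            ((min (i : ℕ) (j : ℕ) : ℤ) + (max (i : ℕ) (j : ℕ) : ℤ) - 2 * (t : ℤ))).eval x

/-- The antidiagonal involution `J`. -/
def Jm (L : ℕ) : Matrix (Fin (L + 1)) (Fin (L + 1)) ℂ :=
  Matrix.of fun i j => if (i : ℕ) + (j : ℕ) = L then 1 else 0

/-- The diagonal leading-coefficient matrix `Γ_n`. -/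
def Gam (q : ℂ) (L n : ℕ) : Matrix (Fin (L + 1)) (Fin (L + 1)) ℂ :=
  Matrix.diagonal fun i =>
    2 ^ n * q ^ n * qp (q ^ (2 * ((i : ℕ) : ℤ) + 2)) (q ^ 2) n *
        qp (q ^ (2 * (L : ℤ) - 2 * ((i : ℕ) : ℤ) + 2)) (q ^ 2) n /
      (qp (q ^ 2) (q ^ 2) n * qp (q ^ (2 * (L : ℤ) + 4)) (q ^ 2) n)

/-- The squared-norm matrix `G_m`. -/
def Gmat (q : ℂ) (L m : ℕ) : Matrix (Fin (L + 1)) (Fin (L + 1)) ℂ :=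
  Matrix.diagonal fun i =>
    q ^ (2 * (m : ℤ) - (L : ℤ)) * (1 - q ^ (2 * (L : ℤ) + 2)) ^ 2 /
      ((1 - q ^ (2 * (m : ℤ) + 2 * ((i : ℕ) : ℤ) + 2)) *
        (1 - q ^ (2 * (L : ℤ) - 2 * ((i : ℕ) : ℤ) + 2 * (m : ℤ) + 2)))

/-- The unipotent lower triangular matrix `L(x)` of the LDU decomposition. -/
def Lm (q : ℂ) (L : ℕ) (C : ℂ → ℂ → ℕ → Polynomial ℂ) (x : ℂ) :
    Matrix (Fin (L + 1)) (Fin (L + 1)) ℂ :=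
  Matrix.of fun m k =>
    if (k : ℕ) ≤ (m : ℕ) then
      q ^ (((m : ℕ) : ℤ) - ((k : ℕ) : ℤ)) * qp (q ^ 2) (q ^ 2) (m : ℕ) *
          qp (q ^ 2) (q ^ 2) (2 * (k : ℕ) + 1) /
          (qp (q ^ 2) (q ^ 2) ((m : ℕ) + (k : ℕ) + 1) * qp (q ^ 2) (q ^ 2) (k : ℕ)) *
        (C (q ^ 2) (q ^ (2 * (k : ℕ) + 2)) ((m : ℕ) - (k : ℕ))).eval x
    else 0

/-- The claimed inverse of `L(x)`. -/
def Linv (q : ℂ) (L : ℕ) (C : ℂ → ℂ → ℕ → Polynomial ℂ) (x : ℂ) :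
    Matrix (Fin (L + 1)) (Fin (L + 1)) ℂ :=
  Matrix.of fun k n =>
    if (n : ℕ) ≤ (k : ℕ) then
      q ^ ((2 * ((k : ℕ) : ℤ) + 1) * (((k : ℕ) : ℤ) - ((n : ℕ) : ℤ))) *
          qp (q ^ 2) (q ^ 2) (k : ℕ) * qp (q ^ 2) (q ^ 2) ((k : ℕ) + (n : ℕ)) /
          (qp (q ^ 2) (q ^ 2) (2 * (k : ℕ)) * qp (q ^ 2) (q ^ 2) (n : ℕ)) *
        (C (q ^ 2) (q ^ (-(2 * ((k : ℕ) : ℤ)))) ((k : ℕ) - (n : ℕ))).eval x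
    else 0

/-- The constants `c_k(ℓ)`. -/
def ckC (q : ℂ) (L k : ℕ) : ℂ :=
  q ^ (-(L : ℤ)) / 4 * (1 - q ^ (4 * k + 2)) * qp (q ^ 2) (q ^ 2) (L + k + 1) *
      qp (q ^ 2) (q ^ 2) (L - k) * qp (q ^ 2) (q ^ 2) k ^ 4 /
    (qp (q ^ 2) (q ^ 2) (2 * k + 1) ^ 2 * qp (q ^ 2) (q ^ 2) L ^ 2)

/-- The diagonal part `T(x)` of the LDU decomposition. -/
def Tm (q : ℂ) (L : ℕ) (x : ℂ) : Matrix (Fin (L + 1)) (Fin (L + 1)) ℂ :=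
  Matrix.diagonal fun k =>
    ckC q L (k : ℕ) *
      (4 * ∏ j ∈ Finset.Icc 1 (k : ℕ), (1 - 2 * (2 * x ^ 2 - 1) * q ^ (2 * j) + q ^ (4 * j)))

/-- The coefficient matrix `M₁(z)` of the q-difference operator `D₁`. -/
def M1f (q : ℂ) (L : ℕ) (z : ℂ) : Matrix (Fin (L + 1)) (Fin (L + 1)) ℂ :=
  Matrix.of fun i j =>
    if (j : ℕ) = (i : ℕ) + 1 then
      -(q ^ (1 - ((i : ℕ) : ℤ)) * (1 - q ^ (2 * (i : ℕ) + 2)) / (1 - q ^ 2) ^ 2 *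
        (z / (1 - z ^ 2)))
    else if (j : ℕ) = (i : ℕ) then
      q ^ (1 - ((i : ℕ) : ℤ)) / (1 - q ^ 2) ^ 2 *
        ((1 - q ^ (2 * (i : ℕ) + 2) * z ^ 2) / (1 - z ^ 2))
    else 0

/-- `M₂(z) = J M₁(z) J`. -/
def M2f (q : ℂ) (L : ℕ) (z : ℂ) : Matrix (Fin (L + 1)) (Fin (L + 1)) ℂ :=
  Jm L * M1f q L z * Jm L

/-- The eigenvalue matrix `Λ_n(1)`. -/
def Lam1 (q : ℂ) (L n : ℕ) : Matrix (Fin (L + 1)) (Fin (L + 1)) ℂ :=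
  Matrix.diagonal fun j =>
    (q ^ (-((j : ℕ) : ℤ) - (n : ℤ) - 1) + q ^ (((j : ℕ) : ℤ) + (n : ℤ) + 1)) / (q⁻¹ - q) ^ 2

/-- The eigenvalue matrix `Λ_n(2) = J Λ_n(1) J`. -/
def Lam2 (q : ℂ) (L n : ℕ) : Matrix (Fin (L + 1)) (Fin (L + 1)) ℂ :=
  Jm L * Lam1 q L n * Jm L

/-- The diagonal coefficient matrix `K₁(z)` of the decoupled operator. -/
def K1f (q : ℂ) (L : ℕ) (z : ℂ) : Matrix (Fin (L + 1)) (Fin (L + 1)) ℂ :=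
  Matrix.diagonal fun i =>
    q ^ (1 - ((i : ℕ) : ℤ)) / (1 - q ^ 2) ^ 2 *
      ((1 - q ^ (2 * (i : ℕ) + 2) * z ^ 2) / (1 - z ^ 2))

/-- The symmetric Laurent polynomial `Ĉ_k(z;β|p)`. -/
def Chat (p β : ℂ) (k : ℕ) (z : ℂ) : ℂ :=
  ∑ r ∈ Finset.range (k + 1),
    qp β p r * qp β p (k - r) / (qp p p r * qp p p (k - r)) * z ^ ((k : ℤ) - 2 * (r : ℤ))

/-- The matrix polynomials `R_n(x) = L(x)ᵀ P_n(x) Γ_n⁻¹`. -/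
def Rmat (q : ℂ) (L : ℕ) (C : ℂ → ℂ → ℕ → Polynomial ℂ) (n : ℕ) (x : ℂ) :
    Matrix (Fin (L + 1)) (Fin (L + 1)) ℂ :=
  (Lm q L C x)ᵀ * evP q L C n x * (Gam q L n)⁻¹

/-!
Entrywise, `P_n = qⁿ (L⁻¹)ᵀ S_n`, where each entry of `S_n` is a multiple of one continuous
q-ultraspherical polynomial, so everything rests on the explicit inverse of `L(x)`.

For a base `p` and `m ∈ ℕ`, the generating function of the `Cₙ(x;pᵐ|p)` is `1 / D_m(T)` with
`D_m(T) = ∏_{j<m} (1 - 2xpʲT + p²ʲT²)`, and that of the `Cₙ(x;p⁻ᵐ|p)`, at `pᵐT`, is `D_m(T)`. The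
entry `(k, i)` of `L⁻¹L` with `k = b + M > i = b - 1` is a multiple of the coefficient of degree
`M + 1` in `D_{b+M} · ∏_{j<M} (1 - p²ᵇ⁺ʲτ) (1 / D_b)`, where `τ` is the q-shift `T ↦ pT`. This
product is a polynomial of degree at most `M`: at each of the `M` steps the denominator gains a
quadratic factor, but the exponents `2b + j` are the ones for which the leading terms cancel.
-/

theorem qp_succ (a p : ℂ) (n : ℕ) : qp a p (n + 1) = qp a p n * (1 - a * p ^ n) :=
  Finset.prod_range_succ _ n

theorem qp_succ' (a p : ℂ) (n : ℕ) : qp a p (n + 1) = (1 - a) * qp (a * p) p n := by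
  simp only [qp, Finset.prod_range_succ', pow_zero, mul_one, mul_assoc, ← pow_succ', mul_comm]

theorem qp_add (a p : ℂ) (m n : ℕ) : qp a p (m + n) = qp a p m * qp (a * p ^ m) p n := by
  simp only [qp, Finset.prod_range_add, mul_assoc, pow_add]

theorem qp_pow_ne_zero {p : ℂ} (hp : ¬IsOfFinOrder p) {m : ℕ} (hm : 0 < m) (n : ℕ) :
    qp (p ^ m) p n ≠ 0 := by
  refine Finset.prod_ne_zero_iff.2 fun j _ hj => hp (isOfFinOrder_iff_pow_eq_one.2 ?_)
  exact ⟨m + j, by omega, by rw [pow_add]; exact (sub_eq_zero.1 hj).symm⟩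

theorem qp_self_ne_zero {p : ℂ} (hp : ¬IsOfFinOrder p) (n : ℕ) : qp p p n ≠ 0 := by
  simpa only [pow_one] using qp_pow_ne_zero hp one_pos n

theorem exists_ne_zero_add_inv_div_two_eq (x : ℂ) : ∃ z : ℂ, z ≠ 0 ∧ (z + z⁻¹) / 2 = x := by
  obtain ⟨w, rfl⟩ := Complex.cos_surjective x
  exact ⟨_, Complex.exp_ne_zero (w * Complex.I), by
    rw [← Complex.exp_neg, ← neg_mul, Complex.cos]⟩

section UltraQuad

variable {R : Type*} [CommRing R]

/-- The quadratic `1 - 2xaT + a²T²` in the power series variable `T`. With `x = (z + z⁻¹) / 2` it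
is `(1 - azT)(1 - az⁻¹T)`, one factor of the denominator in the generating function of the
continuous q-ultraspherical polynomials. -/
def ultraQuad (x a : R) : PowerSeries R :=
  1 - PowerSeries.C (2 * x * a) * PowerSeries.X + PowerSeries.C (a ^ 2) * PowerSeries.X ^ 2

/-- The product `∏_{j<m} (1 - 2xpʲT + p²ʲT²)`, whose inverse is the generating function of the
continuous q-ultraspherical polynomials with base `p` and parameter `pᵐ`. -/
def ultraDenom (p x : R) (m : ℕ) : PowerSeries R :=
  ∏ j ∈ Finset.range m, ultraQuad x (p ^ j)

theorem coeff_add_two_ultraQuad_mul (x a : R) (N : PowerSeries R) (n : ℕ) :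
    PowerSeries.coeff (n + 2) (ultraQuad x a * N) =
      PowerSeries.coeff (n + 2) N - 2 * x * a * PowerSeries.coeff (n + 1) N +
        a ^ 2 * PowerSeries.coeff n N := by
  simp only [ultraQuad, add_mul, sub_mul, one_mul, mul_assoc, map_add, map_sub,
    PowerSeries.coeff_C_mul, PowerSeries.coeff_succ_X_mul, PowerSeries.coeff_X_pow_mul]

theorem ultraQuad_eq_mul {x a u v : R} (hadd : 2 * x * a = u + v) (hmul : a ^ 2 = u * v) :
    ultraQuad x a =
      (1 - PowerSeries.C u * PowerSeries.X) * (1 - PowerSeries.C v * PowerSeries.X) := by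
  rw [ultraQuad, hadd, hmul, map_add, map_mul]
  ring

theorem rescale_ultraQuad (x a c : R) :
    PowerSeries.rescale c (ultraQuad x a) = ultraQuad x (c * a) := by
  have hC (r : R) : PowerSeries.rescale c (PowerSeries.C r) = PowerSeries.C r := by
    ext n
    cases n <;> simp [PowerSeries.coeff_C]
  simp only [ultraQuad, map_add, map_sub, map_mul, map_pow, map_one, hC, PowerSeries.rescale_X]
  ring

theorem ultraDenom_succ (p x : R) (m : ℕ) :
    ultraDenom p x (m + 1) = ultraDenom p x m * ultraQuad x (p ^ m) :=
  Finset.prod_range_succ _ m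

theorem ultraDenom_succ' (p x : R) (m : ℕ) :
    ultraDenom p x (m + 1) = PowerSeries.rescale p (ultraDenom p x m) * ultraQuad x 1 := by
  simp only [ultraDenom, Finset.prod_range_succ', map_prod, rescale_ultraQuad, pow_succ', pow_zero]

-- The hypothesis on `c` says that the two contributions to degree `M + 2` cancel.
theorem coeff_ultraQuad_mul_sub_eq_zero {p x a c : R} {M : ℕ} (hc : c * p ^ M = a ^ 2)
    {N : PowerSeries R} (hN : ∀ n, M < n → PowerSeries.coeff n N = 0) {n : ℕ} (hn : M + 1 < n) :
    PowerSeries.coeff n (ultraQuad x a * N -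
      PowerSeries.C c * (ultraQuad x 1 * PowerSeries.rescale p N)) = 0 := by
  obtain ⟨n, rfl⟩ := Nat.exists_eq_add_of_le' (show 2 ≤ n by omega)
  have hMn : M ≤ n := by omega
  simp only [map_sub, PowerSeries.coeff_C_mul, coeff_add_two_ultraQuad_mul,
    PowerSeries.coeff_rescale, hN (n + 2) (by omega), hN (n + 1) (by omega)]
  rcases hMn.eq_or_lt with rfl | hlt
  · linear_combination -PowerSeries.coeff M N * hc
  · rw [hN n hlt]
    ring

end UltraQuad

/-- The q-binomial series `∑ᵣ (β;p)ᵣ / (p;p)ᵣ (uT)ʳ`. -/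
def qBinomialSeries (p β u : ℂ) : PowerSeries ℂ :=
  PowerSeries.mk fun r => qp β p r / qp p p r * u ^ r

theorem qBinomialSeries_mul_one_sub {p : ℂ} (hp : ¬IsOfFinOrder p) (β u : ℂ) :
    qBinomialSeries p (β * p) u * (1 - PowerSeries.C (β * u) * PowerSeries.X) =
      qBinomialSeries p β u := by
  ext r
  rw [mul_sub, mul_one, mul_left_comm, map_sub, PowerSeries.coeff_C_mul]
  cases r with
  | zero => simp [qBinomialSeries, qp]
  | succ r =>
    have hr := qp_self_ne_zero hp (r + 1)
    rw [qp_succ] at hr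
    obtain ⟨_, _⟩ := mul_ne_zero_iff.1 hr
    simp only [PowerSeries.coeff_succ_mul_X, qBinomialSeries, PowerSeries.coeff_mk]
    rw [qp_succ p, qp_succ' β, qp_succ (β * p)]
    field_simp
    ring

theorem qBinomialSeries_one (p u : ℂ) : qBinomialSeries p 1 u = 1 := by
  ext r
  cases r <;> simp [qBinomialSeries, qp, Finset.prod_range_succ', PowerSeries.coeff_one]

/-- The generating function `∑ₙ Cₙ(x;β|p) Tⁿ` of the continuous q-ultraspherical polynomials. -/
def ultraSeries (C : ℂ → ℂ → ℕ → Polynomial ℂ) (p β x : ℂ) : PowerSeries ℂ :=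
  PowerSeries.mk fun n => (C p β n).eval x

section Ultraspherical

variable {C : ℂ → ℂ → ℕ → Polynomial ℂ} {p : ℂ}

theorem ultraSeries_eq_qBinomialSeries_mul (hC : IsUltra C) (p β : ℂ) {z : ℂ} (hz : z ≠ 0) :
    ultraSeries C p β ((z + z⁻¹) / 2) = qBinomialSeries p β z⁻¹ * qBinomialSeries p β z := by
  ext n
  rw [ultraSeries, PowerSeries.coeff_mk, (hC p β n).2 z hz, PowerSeries.coeff_mul,
    Finset.Nat.sum_antidiagonal_eq_sum_range_succ_mk]
  refine Finset.sum_congr rfl fun r hr => ?_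
  have hrn : r ≤ n := by simpa [Nat.lt_succ_iff] using hr
  have hpow : z ^ ((n : ℤ) - 2 * r) = z⁻¹ ^ r * z ^ (n - r) := by
    rw [inv_pow, ← zpow_natCast, ← zpow_natCast, ← _root_.zpow_neg, ← zpow_add₀ hz]
    congr 1
    omega
  simp only [qBinomialSeries, PowerSeries.coeff_mk, hpow]
  ring

theorem ultraSeries_one (hC : IsUltra C) (p x : ℂ) : ultraSeries C p 1 x = 1 := by
  obtain ⟨z, hz, rfl⟩ := exists_ne_zero_add_inv_div_two_eq x
  rw [ultraSeries_eq_qBinomialSeries_mul hC p 1 hz, qBinomialSeries_one, qBinomialSeries_one,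
    one_mul]

theorem ultraSeries_mul_ultraQuad (hC : IsUltra C) (hp : ¬IsOfFinOrder p) (β x : ℂ) :
    ultraSeries C p (β * p) x * ultraQuad x β = ultraSeries C p β x := by
  obtain ⟨z, hz, rfl⟩ := exists_ne_zero_add_inv_div_two_eq x
  have hquad : ultraQuad ((z + z⁻¹) / 2) β =
      (1 - PowerSeries.C (β * z⁻¹) * PowerSeries.X) *
        (1 - PowerSeries.C (β * z) * PowerSeries.X) :=
    ultraQuad_eq_mul (by ring) (by field_simp)
  rw [ultraSeries_eq_qBinomialSeries_mul hC _ _ hz, hquad, mul_mul_mul_comm,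
    qBinomialSeries_mul_one_sub hp, qBinomialSeries_mul_one_sub hp,
    ← ultraSeries_eq_qBinomialSeries_mul hC _ _ hz]

theorem ultraSeries_mul_prod_ultraQuad (hC : IsUltra C) (hp : ¬IsOfFinOrder p) (β x : ℂ) (m : ℕ) :
    ultraSeries C p (β * p ^ m) x * ∏ j ∈ Finset.range m, ultraQuad x (β * p ^ j) =
      ultraSeries C p β x := by
  induction m with
  | zero => simp
  | succ m ih =>
    rw [Finset.prod_range_succ, mul_left_comm, pow_succ, ← mul_assoc β,
      ultraSeries_mul_ultraQuad hC hp, mul_comm, ih]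

theorem ultraDenom_mul_ultraSeries (hC : IsUltra C) (hp : ¬IsOfFinOrder p) (x : ℂ) (m : ℕ) :
    ultraDenom p x m * ultraSeries C p (p ^ m) x = 1 := by
  simpa only [ultraDenom, one_mul, ultraSeries_one hC, mul_comm (ultraSeries _ _ _ _)] using
    ultraSeries_mul_prod_ultraQuad hC hp 1 x m

theorem rescale_ultraSeries_inv (hC : IsUltra C) (hp0 : p ≠ 0) (hp : ¬IsOfFinOrder p) (x : ℂ)
    (m : ℕ) :
    PowerSeries.rescale (p ^ m) (ultraSeries C p (p ^ m)⁻¹ x) = ultraDenom p x m := by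
  have hpm : p ^ m ≠ 0 := pow_ne_zero m hp0
  rw [← ultraSeries_mul_prod_ultraQuad hC hp (p ^ m)⁻¹ x m, inv_mul_cancel₀ hpm,
    ultraSeries_one hC, one_mul, map_prod]
  simp only [rescale_ultraQuad, mul_inv_cancel_left₀ hpm, ultraDenom]

/-- The series `∑ₛ (p²ᵇ⁺ˢ;p)_M Fₛ Tˢ`: the product of the operators `1 - p²ᵇ⁺ʲτ`, `j < M`, applied
to `F`, where `(τF)(T) = F(pT)`. -/
def qpTwist (p : ℂ) (b M : ℕ) (F : PowerSeries ℂ) : PowerSeries ℂ :=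
  PowerSeries.mk fun s => qp (p ^ (2 * b + s)) p M * PowerSeries.coeff s F

theorem qpTwist_succ (p : ℂ) (b M : ℕ) (F : PowerSeries ℂ) :
    qpTwist p b (M + 1) F = qpTwist p b M F -
      PowerSeries.C (p ^ (2 * b + M)) * PowerSeries.rescale p (qpTwist p b M F) := by
  ext s
  simp only [qpTwist, map_sub, PowerSeries.coeff_C_mul, PowerSeries.coeff_rescale,
    PowerSeries.coeff_mk, qp_succ]
  ring

-- Each operator `1 - p²ᵇ⁺ʲτ` adds one factor to the denominator but raises the degree of the
-- numerator by one only, instead of two.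
theorem coeff_ultraDenom_mul_qpTwist_eq_zero {x : ℂ} {b : ℕ} {F : PowerSeries ℂ}
    (hF : ultraDenom p x b * F = 1) (M : ℕ) :
    ∀ n, M < n → PowerSeries.coeff n (ultraDenom p x (b + M) * qpTwist p b M F) = 0 := by
  induction M with
  | zero =>
    intro n hn
    have h0 : qpTwist p b 0 F = F := by ext s; simp [qpTwist, qp]
    rw [h0, add_zero, hF, PowerSeries.coeff_one, if_neg hn.ne']
  | succ M ih =>
    intro n hn
    have hsplit : ultraDenom p x (b + (M + 1)) * qpTwist p b (M + 1) F =
        ultraQuad x (p ^ (b + M)) * (ultraDenom p x (b + M) * qpTwist p b M F) -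
          PowerSeries.C (p ^ (2 * b + M)) * (ultraQuad x 1 *
            PowerSeries.rescale p (ultraDenom p x (b + M) * qpTwist p b M F)) := by
      rw [qpTwist_succ, mul_sub, ← add_assoc]
      nth_rw 1 [ultraDenom_succ]
      rw [ultraDenom_succ', map_mul]
      ring
    rw [hsplit]
    exact coeff_ultraQuad_mul_sub_eq_zero (by ring) ih hn

theorem sum_ultra_mul_ultra_eq_zero (hC : IsUltra C) (hp0 : p ≠ 0) (hp : ¬IsOfFinOrder p) (x : ℂ)
    (b : ℕ) {M N : ℕ} (hMN : M < N) :
    ∑ s ∈ Finset.range (N + 1),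
      (p ^ (b + M)) ^ (N - s) * (C p (p ^ (b + M))⁻¹ (N - s)).eval x *
        (qp (p ^ (2 * b + s)) p M * (C p (p ^ b) s).eval x) = 0 := by
  have h := coeff_ultraDenom_mul_qpTwist_eq_zero (ultraDenom_mul_ultraSeries hC hp x b) M N hMN
  rw [← rescale_ultraSeries_inv hC hp0 hp, mul_comm, PowerSeries.coeff_mul,
    Finset.Nat.sum_antidiagonal_eq_sum_range_succ_mk] at h
  rw [← h]
  refine Finset.sum_congr rfl fun s _ => ?_
  simp only [PowerSeries.coeff_rescale, ultraSeries, qpTwist, PowerSeries.coeff_mk]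
  ring

end Ultraspherical

section Matrices

variable {q : ℂ} {C : ℂ → ℂ → ℕ → Polynomial ℂ}

/-- The entries of `L(x)` on and below the diagonal, indexed by natural numbers. -/
def LmEntry (q : ℂ) (C : ℂ → ℂ → ℕ → Polynomial ℂ) (x : ℂ) (m k : ℕ) : ℂ :=
  q ^ ((m : ℤ) - (k : ℤ)) * qp (q ^ 2) (q ^ 2) m * qp (q ^ 2) (q ^ 2) (2 * k + 1) /
      (qp (q ^ 2) (q ^ 2) (m + k + 1) * qp (q ^ 2) (q ^ 2) k) *
    (C (q ^ 2) (q ^ (2 * k + 2)) (m - k)).eval x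

/-- The entries of `L(x)⁻¹` on and below the diagonal, indexed by natural numbers. -/
def LinvEntry (q : ℂ) (C : ℂ → ℂ → ℕ → Polynomial ℂ) (x : ℂ) (k n : ℕ) : ℂ :=
  q ^ ((2 * (k : ℤ) + 1) * ((k : ℤ) - (n : ℤ))) *
        qp (q ^ 2) (q ^ 2) k * qp (q ^ 2) (q ^ 2) (k + n) /
      (qp (q ^ 2) (q ^ 2) (2 * k) * qp (q ^ 2) (q ^ 2) n) *
    (C (q ^ 2) (q ^ (-(2 * (k : ℤ)))) (k - n)).eval x

/-- The entries of `q⁻ⁿ L(x)ᵀ P_n(x)`, indexed by natural numbers; they are meant for `k ≤ n + j`,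
and the remaining entries of that matrix vanish. -/
def decoupledEntry (q : ℂ) (L : ℕ) (C : ℂ → ℂ → ℕ → Polynomial ℂ) (n : ℕ) (x : ℂ)
    (k j : ℕ) : ℂ :=
  (-1 : ℂ) ^ k *
    q ^ ((j : ℤ) * (2 * (k : ℤ) + 1) + 2 * (k : ℤ) * ((L : ℤ) + (n : ℤ) + 1) - (k : ℤ) ^ 2) *
    (qp (q ^ (-(2 * (L : ℤ)))) (q ^ 2) k * qp (q ^ (-(2 * (j : ℤ) + 2 * (n : ℤ)))) (q ^ 2) k /
      (qp (q ^ 2) (q ^ 2) k * qp (q ^ (2 * (L : ℤ) + 4)) (q ^ 2) k)) *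
    (qp (q ^ 2) (q ^ 2) (n + j - k) / qp (q ^ (4 * (k : ℤ) + 4)) (q ^ 2) (n + j - k)) *
    qRacah (q ^ 2) 1 1 (q ^ (-(2 * (n : ℤ) + 2 * (j : ℤ) + 2))) (q ^ (-(2 * (L : ℤ) + 2))) k j *
    (C (q ^ 2) (q ^ (2 * k + 2)) (n + j - k)).eval x

/-- The matrix `q⁻ⁿ L(x)ᵀ P_n(x)`, each of whose entries involves a single continuous
q-ultraspherical polynomial. -/
def decoupledMatrix (q : ℂ) (L : ℕ) (C : ℂ → ℂ → ℕ → Polynomial ℂ) (n : ℕ) (x : ℂ) :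
    Matrix (Fin (L + 1)) (Fin (L + 1)) ℂ :=
  Matrix.of fun k j => if (k : ℕ) ≤ n + (j : ℕ) then decoupledEntry q L C n x k j else 0

theorem sum_ite_le_mul_ite_le {R : Type*} [NonUnitalNonAssocSemiring R] (L a b : ℕ)
    (f g : ℕ → R) :
    ∑ m : Fin (L + 1), (if a ≤ (m : ℕ) then f m else 0) * (if (m : ℕ) ≤ b then g m else 0) =
      ∑ m ∈ Finset.Icc a (min L b), f m * g m := by
  rw [Fin.sum_univ_eq_sum_range
    (fun m => (if a ≤ m then f m else 0) * (if m ≤ b then g m else 0)) (L + 1)]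
  simp only [ite_zero_mul_ite_zero, ← Finset.sum_filter]
  refine Finset.sum_congr ?_ fun _ _ => rfl
  ext m
  simp only [Finset.mem_filter, Finset.mem_range, Finset.mem_Icc]
  omega

theorem eval_ultra_zero (hC : IsUltra C) (p β x : ℂ) : (C p β 0).eval x = 1 := by
  obtain ⟨z, hz, rfl⟩ := exists_ne_zero_add_inv_div_two_eq x
  simp [(hC p β 0).2 z hz, qp]

theorem LmEntry_mul_LinvEntry_self (hC : IsUltra C) (hq : ¬IsOfFinOrder (q ^ 2)) (x : ℂ) (k : ℕ) :
    LmEntry q C x k k * LinvEntry q C x k k = 1 := by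
  have h₀ := qp_self_ne_zero hq k
  have h₁ := qp_self_ne_zero hq (2 * k)
  have h₂ := qp_self_ne_zero hq (2 * k + 1)
  simp only [LmEntry, LinvEntry, sub_self, mul_zero, zpow_zero, Nat.sub_self,
    eval_ultra_zero hC, ← two_mul]
  field_simp

theorem LmEntry_mul_LinvEntry (hq0 : q ≠ 0) (hq : ¬IsOfFinOrder (q ^ 2)) (x : ℂ) (i : ℕ)
    {M s : ℕ} (hs : s ≤ M + 1) :
    LmEntry q C x (i + s) i * LinvEntry q C x (i + (M + 1)) (i + s) =
      q ^ (M + 1) * qp (q ^ 2) (q ^ 2) (i + (M + 1)) * qp (q ^ 2) (q ^ 2) (2 * i + 1) /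
          (qp (q ^ 2) (q ^ 2) (2 * (i + (M + 1))) * qp (q ^ 2) (q ^ 2) i) *
        (((q ^ 2) ^ (i + 1 + M)) ^ (M + 1 - s) *
            (C (q ^ 2) ((q ^ 2) ^ (i + 1 + M))⁻¹ (M + 1 - s)).eval x *
          (qp ((q ^ 2) ^ (2 * (i + 1) + s)) (q ^ 2) M *
            (C (q ^ 2) ((q ^ 2) ^ (i + 1)) s).eval x)) := by
  obtain ⟨r, hr⟩ := Nat.exists_eq_add_of_le hs
  have hqp : qp (q ^ 2) (q ^ 2) (i + (M + 1) + (i + s)) =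
      qp (q ^ 2) (q ^ 2) (i + s + i + 1) * qp ((q ^ 2) ^ (2 * (i + 1) + s)) (q ^ 2) M := by
    rw [show i + (M + 1) + (i + s) = i + s + i + 1 + M by ring, qp_add, ← pow_succ']
    congr 3
    ring
  have hexp : q ^ ((2 * ((i + (M + 1) : ℕ) : ℤ) + 1) *
      (((i + (M + 1) : ℕ) : ℤ) - ((i + s : ℕ) : ℤ))) = ((q ^ 2) ^ (i + 1 + M)) ^ r * q ^ r := by
    rw [hr, ← pow_mul, ← pow_mul, ← pow_add, ← zpow_natCast]
    congr 1
    have hM : (M : ℤ) + 1 = s + r := by exact_mod_cast hr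
    push_cast
    linear_combination (-2 * (r : ℤ)) * hM
  have hparam : q ^ (-(2 * ((i + (M + 1) : ℕ) : ℤ))) = ((q ^ 2) ^ (i + 1 + M))⁻¹ := by
    rw [_root_.zpow_neg, ← pow_mul, ← zpow_natCast]
    congr 2
    push_cast
    ring
  have hdiff : q ^ (((i + s : ℕ) : ℤ) - (i : ℤ)) = q ^ s := by
    rw [Nat.cast_add, add_sub_cancel_left, zpow_natCast]
  have h₀ := qp_self_ne_zero hq (i + s)
  have h₁ := qp_self_ne_zero hq (i + s + i + 1)
  rw [LmEntry, LinvEntry, hqp, hexp, hparam, hdiff, Nat.add_sub_add_left, Nat.add_sub_cancel_left,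
    show M + 1 - s = r by omega, show q ^ (2 * i + 2) = (q ^ 2) ^ (i + 1) by ring,
    show q ^ (M + 1) = q ^ s * q ^ r by rw [hr, pow_add]]
  field_simp

theorem sum_LmEntry_mul_LinvEntry (hC : IsUltra C) (hq0 : q ≠ 0) (hq : ¬IsOfFinOrder (q ^ 2))
    (x : ℂ) (i k : ℕ) :
    ∑ m ∈ Finset.Icc i k, LmEntry q C x m i * LinvEntry q C x k m = if i = k then 1 else 0 := by
  rcases lt_trichotomy i k with hik | rfl | hki
  · obtain ⟨M, rfl⟩ : ∃ M, k = i + (M + 1) := ⟨k - i - 1, by omega⟩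
    rw [if_neg hik.ne, ← Finset.Ico_add_one_right_eq_Icc, Finset.sum_Ico_eq_sum_range,
      add_assoc i, Nat.add_sub_cancel_left,
      Finset.sum_congr rfl fun s hs => LmEntry_mul_LinvEntry (C := C) hq0 hq x i
        (Nat.le_of_lt_add_one (Finset.mem_range.1 hs)),
      ← Finset.mul_sum,
      sum_ultra_mul_ultra_eq_zero hC (pow_ne_zero 2 hq0) hq x (i + 1) M.lt_succ_self, mul_zero]
  · rw [Finset.Icc_self, Finset.sum_singleton, LmEntry_mul_LinvEntry_self hC hq, if_pos rfl]
  · rw [Finset.Icc_eq_empty hki.not_ge, Finset.sum_empty, if_neg hki.ne']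

theorem transpose_Lm_mul_transpose_Linv (hC : IsUltra C) (hq0 : q ≠ 0)
    (hq : ¬IsOfFinOrder (q ^ 2)) (L : ℕ) (x : ℂ) : (Lm q L C x)ᵀ * (Linv q L C x)ᵀ = 1 := by
  ext i k
  have hk : min L (k : ℕ) = k := min_eq_right (Nat.lt_succ_iff.1 k.2)
  have hsum := sum_ite_le_mul_ite_le L i k (LmEntry q C x · i) (LinvEntry q C x k)
  rw [hk, sum_LmEntry_mul_LinvEntry hC hq0 hq] at hsum
  simp only [Matrix.one_apply, Fin.ext_iff]
  exact hsum

theorem evP_eq_smul_transpose_Linv_mul (hq0 : q ≠ 0) (L : ℕ) (C : ℂ → ℂ → ℕ → Polynomial ℂ) (n : ℕ)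
    (x : ℂ) :
    evP q L C n x = q ^ n • ((Linv q L C x)ᵀ * decoupledMatrix q L C n x) := by
  ext i j
  have hsum := sum_ite_le_mul_ite_le L i (n + j) (LinvEntry q C x · i)
    (decoupledEntry q L C n x · j)
  have hmul : ((Linv q L C x)ᵀ * decoupledMatrix q L C n x) i j = _ := hsum
  rw [Matrix.smul_apply, hmul, smul_eq_mul, Finset.mul_sum]
  simp only [evP, Pm, Matrix.map_apply, Matrix.of_apply, Polynomial.eval_finsetSum,
    Polynomial.eval_mul, Polynomial.eval_C]
  refine Finset.sum_congr rfl fun k _ => ?_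
  have hexp : q ^ ((n : ℤ) + (2 * (k : ℤ) + 1) * ((k : ℤ) - ((i : ℕ) : ℤ)) +
        ((j : ℕ) : ℤ) * (2 * (k : ℤ) + 1) + 2 * (k : ℤ) * ((L : ℤ) + (n : ℤ) + 1) - (k : ℤ) ^ 2) =
      q ^ n * q ^ ((2 * (k : ℤ) + 1) * ((k : ℤ) - ((i : ℕ) : ℤ))) *
        q ^ (((j : ℕ) : ℤ) * (2 * (k : ℤ) + 1) + 2 * (k : ℤ) * ((L : ℤ) + (n : ℤ) + 1) -
          (k : ℤ) ^ 2) := by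
    rw [← zpow_natCast, ← zpow_add₀ hq0, ← zpow_add₀ hq0]
    congr 1
    ring
  have hparam : q ^ (2 * (k : ℤ) + 2) = q ^ (2 * k + 2) := by norm_cast
  rw [hexp, hparam, LinvEntry, decoupledEntry]
  ring

theorem Gam_diagonal_ne_zero (hq0 : q ≠ 0) (hq : ¬IsOfFinOrder (q ^ 2)) (L n : ℕ)
    (j : Fin (L + 1)) :
    2 ^ n * q ^ n * qp (q ^ (2 * ((j : ℕ) : ℤ) + 2)) (q ^ 2) n *
        qp (q ^ (2 * (L : ℤ) - 2 * ((j : ℕ) : ℤ) + 2)) (q ^ 2) n /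
      (qp (q ^ 2) (q ^ 2) n * qp (q ^ (2 * (L : ℤ) + 4)) (q ^ 2) n) ≠ 0 := by
  have hqp {a : ℤ} (m : ℕ) (ha : a = 2 * (m + 1)) : qp (q ^ a) (q ^ 2) n ≠ 0 := by
    have hpow : q ^ a = (q ^ 2) ^ (m + 1) := by
      rw [ha, ← pow_mul, ← zpow_natCast]
      push_cast
      rfl
    rw [hpow]
    exact qp_pow_ne_zero hq m.succ_pos n
  exact div_ne_zero
    (mul_ne_zero (mul_ne_zero (mul_ne_zero (pow_ne_zero n two_ne_zero) (pow_ne_zero n hq0))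
      (hqp j (by ring))) (hqp (L - j) (by omega)))
    (mul_ne_zero (qp_self_ne_zero hq n) (hqp (L + 1) (by push_cast; ring)))

theorem inv_diagonal_of_forall_ne_zero {ι K : Type*} [Fintype ι] [DecidableEq ι] [Field K]
    {v : ι → K} (hv : ∀ j, v j ≠ 0) : (Matrix.diagonal v)⁻¹ = Matrix.diagonal v⁻¹ := by
  refine Matrix.inv_eq_right_inv ?_
  rw [Matrix.diagonal_mul_diagonal, ← Matrix.diagonal_one]
  exact congrArg Matrix.diagonal (funext fun j => mul_inv_cancel₀ (hv j))

theorem pow_smul_Gam_inv (hq0 : q ≠ 0) (hq : ¬IsOfFinOrder (q ^ 2)) (L n : ℕ) :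
    q ^ n • (Gam q L n)⁻¹ = Matrix.diagonal fun j : Fin (L + 1) =>
      2 ^ (-(n : ℤ)) * (qp (q ^ 2) (q ^ 2) n * qp (q ^ (2 * (L : ℤ) + 4)) (q ^ 2) n /
        (qp (q ^ (2 * ((j : ℕ) : ℤ) + 2)) (q ^ 2) n *
          qp (q ^ (2 * (L : ℤ) - 2 * ((j : ℕ) : ℤ) + 2)) (q ^ 2) n)) := by
  rw [Gam, inv_diagonal_of_forall_ne_zero (Gam_diagonal_ne_zero hq0 hq L n), ← Matrix.diagonal_smul]
  congr 1
  ext j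
  rw [Pi.smul_apply, Pi.inv_apply, inv_div, smul_eq_mul, _root_.zpow_neg, zpow_natCast]
  field_simp

theorem Rmat_eq_decoupledMatrix_mul (hC : IsUltra C) (hq0 : q ≠ 0) (hq : ¬IsOfFinOrder (q ^ 2))
    (L n : ℕ) (x : ℂ) :
    Rmat q L C n x = decoupledMatrix q L C n x * (q ^ n • (Gam q L n)⁻¹) := by
  rw [Rmat, evP_eq_smul_transpose_Linv_mul hq0, Matrix.mul_smul, ← Matrix.mul_assoc,
    transpose_Lm_mul_transpose_Linv hC hq0 hq, Matrix.one_mul, Matrix.smul_mul, Matrix.mul_smul]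

end Matrices

theorem stmt13_general (q : ℂ) (hq0 : q ≠ 0) (hq : ¬IsOfFinOrder q) (L : ℕ)
    (C : ℂ → ℂ → ℕ → Polynomial ℂ) (hC : IsUltra C) (n : ℕ) :
    ∀ (i j : Fin (L + 1)) (x : ℂ),
      Rmat q L C n x i j =
        if (i : ℕ) ≤ n + (j : ℕ) then
          (-1 : ℂ) ^ (i : ℕ) * (2 : ℂ) ^ (-(n : ℤ)) *
            q ^ (((j : ℕ) : ℤ) * (2 * ((i : ℕ) : ℤ) + 1) +
                2 * ((i : ℕ) : ℤ) * ((L : ℤ) + (n : ℤ) + 1) - ((i : ℕ) : ℤ) ^ 2) *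
            (qp (q ^ 2) (q ^ 2) n *
                qp (q ^ (2 * (L : ℤ) + 4)) (q ^ 2) n /
              (qp (q ^ (2 * ((j : ℕ) : ℤ) + 2)) (q ^ 2) n *
                qp (q ^ (2 * (L : ℤ) - 2 * ((j : ℕ) : ℤ) + 2)) (q ^ 2) n)) *
            (qp (q ^ (-(2 * (L : ℤ)))) (q ^ 2) (i : ℕ) *
                qp (q ^ (-(2 * ((j : ℕ) : ℤ) + 2 * (n : ℤ)))) (q ^ 2) (i : ℕ) /
              (qp (q ^ 2) (q ^ 2) (i : ℕ) *
                qp (q ^ (2 * (L : ℤ) + 4)) (q ^ 2) (i : ℕ))) *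
            (qp (q ^ 2) (q ^ 2) (n + (j : ℕ) - (i : ℕ)) /
              qp (q ^ (4 * ((i : ℕ) : ℤ) + 4)) (q ^ 2) (n + (j : ℕ) - (i : ℕ))) *
            qRacah (q ^ 2) 1 1 (q ^ (-(2 * (n : ℤ) + 2 * ((j : ℕ) : ℤ) + 2)))
              (q ^ (-(2 * (L : ℤ) + 2))) (i : ℕ) (j : ℕ) *
            (C (q ^ 2) (q ^ (2 * (i : ℕ) + 2)) (n + (j : ℕ) - (i : ℕ))).eval x
        else 0 := by
  intro i j x
  have hq2 : ¬IsOfFinOrder (q ^ 2) := fun h => hq (h.of_pow two_ne_zero)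
  rw [Rmat_eq_decoupledMatrix_mul hC hq0 hq2, pow_smul_Gam_inv hq0 hq2, Matrix.mul_diagonal,
    decoupledMatrix, Matrix.of_apply, ite_mul, zero_mul]
  refine if_congr Iff.rfl ?_ rfl
  rw [decoupledEntry]
  ring

/-- explicit formula for the entries of `R_n(x) = L(x)ᵀ P_n(x) Γ_n⁻¹`:
each entry is an explicit multiple of a single continuous q-ultraspherical polynomial,
and it vanishes identically when `i > n + j`. -/
theorem stmt13 (q : ℝ) (hq0 : 0 < q) (hq1 : q < 1) (L : ℕ)
    (C : ℂ → ℂ → ℕ → Polynomial ℂ) (hC : IsUltra C) (n : ℕ) :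
    ∀ (i j : Fin (L + 1)) (x : ℂ),
      Rmat (q : ℂ) L C n x i j =
        if (i : ℕ) ≤ n + (j : ℕ) then
          (-1 : ℂ) ^ (i : ℕ) * (2 : ℂ) ^ (-(n : ℤ)) *
            (q : ℂ) ^ (((j : ℕ) : ℤ) * (2 * ((i : ℕ) : ℤ) + 1) +
                2 * ((i : ℕ) : ℤ) * ((L : ℤ) + (n : ℤ) + 1) - ((i : ℕ) : ℤ) ^ 2) *
            (qp ((q : ℂ) ^ 2) ((q : ℂ) ^ 2) n *
                qp ((q : ℂ) ^ (2 * (L : ℤ) + 4)) ((q : ℂ) ^ 2) n /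
              (qp ((q : ℂ) ^ (2 * ((j : ℕ) : ℤ) + 2)) ((q : ℂ) ^ 2) n *
                qp ((q : ℂ) ^ (2 * (L : ℤ) - 2 * ((j : ℕ) : ℤ) + 2)) ((q : ℂ) ^ 2) n)) *
            (qp ((q : ℂ) ^ (-(2 * (L : ℤ)))) ((q : ℂ) ^ 2) (i : ℕ) *
                qp ((q : ℂ) ^ (-(2 * ((j : ℕ) : ℤ) + 2 * (n : ℤ)))) ((q : ℂ) ^ 2) (i : ℕ) /
              (qp ((q : ℂ) ^ 2) ((q : ℂ) ^ 2) (i : ℕ) *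
                qp ((q : ℂ) ^ (2 * (L : ℤ) + 4)) ((q : ℂ) ^ 2) (i : ℕ))) *
            (qp ((q : ℂ) ^ 2) ((q : ℂ) ^ 2) (n + (j : ℕ) - (i : ℕ)) /
              qp ((q : ℂ) ^ (4 * ((i : ℕ) : ℤ) + 4)) ((q : ℂ) ^ 2) (n + (j : ℕ) - (i : ℕ))) *
            qRacah ((q : ℂ) ^ 2) 1 1 ((q : ℂ) ^ (-(2 * (n : ℤ) + 2 * ((j : ℕ) : ℤ) + 2)))
              ((q : ℂ) ^ (-(2 * (L : ℤ) + 2))) (i : ℕ) (j : ℕ) *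
            (C ((q : ℂ) ^ 2) ((q : ℂ) ^ (2 * (i : ℕ) + 2)) (n + (j : ℕ) - (i : ℕ))).eval x
        else 0 := by
  have hnorm : ‖(q : ℂ)‖ ≠ 1 := by simpa [abs_of_pos hq0] using hq1.ne
  exact stmt13_general q (by exact_mod_cast hq0.ne') (fun h => hnorm h.norm_eq_one) L C hC n

end
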